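/- Let K be an n×n Hermitian complex matrix with 0 ≤ K ≤ I (both K and I − K positive semidefinite), and let B₁, B₂ be n×n positive semidefinite Hermitian matrices. Then Tr(B₁ K B₂ K) is real and satisfies 0 ≤ Tr(B₁ K B₂ K) ≤ (1/2)·Tr((B₁ + B₂)² K). -/

import Mathlib

/-!
The trace of a product of two positive semidefinite matrices is nonnegative. Applied to `B₁` and
`K B₂ K`, this gives that `Tr(B₁KB₂K)` is real and nonnegative. For the upper bound put
`B = B₁ + B₂`: expanding, `Tr(BKBK) = Tr(B₁KB₁K) + 2 Tr(B₁KB₂K) + Tr(B₂KB₂K) ≥ 2 Tr(B₁KB₂K)`,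
while `Tr(B²K) - Tr(BKBK) = Tr(BKB(1 - K)) ≥ 0` because `BKB` and `1 - K` are positive
semidefinite.
-/

open Matrix
open scoped ComplexOrder

open scoped MatrixOrder in
theorem trace_mul_nonneg_of_posSemidef {n : ℕ} {P Q : Matrix (Fin n) (Fin n) ℂ}
    (hP : P.PosSemidef) (hQ : Q.PosSemidef) : 0 ≤ (P * Q).trace := by
  obtain ⟨C, rfl⟩ := CStarAlgebra.nonneg_iff_eq_star_mul_self.mp hP.nonneg
  rw [Matrix.star_eq_conjTranspose, Matrix.mul_assoc, Matrix.trace_mul_comm]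
  exact (hQ.mul_mul_conjTranspose_same C).trace_nonneg

theorem trace_sandwich_nonneg {n : ℕ} {K A B : Matrix (Fin n) (Fin n) ℂ}
    (hK : K.IsHermitian) (hA : A.PosSemidef) (hB : B.PosSemidef) :
    0 ≤ (A * K * B * K).trace := by
  have hKBK : (K * B * K).PosSemidef := by
    simpa only [hK.eq] using hB.mul_mul_conjTranspose_same K
  simpa only [Matrix.mul_assoc] using trace_mul_nonneg_of_posSemidef hA hKBK

/-- If `K ≥ 0`, `K ≤ 1` and `B` is Hermitian, then `Tr(BKBK) ≤ Tr(B²K)`. -/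
theorem trace_sandwich_self_le {n : ℕ} {K B : Matrix (Fin n) (Fin n) ℂ}
    (hK : K.PosSemidef) (hK1 : (1 - K).PosSemidef) (hB : B.IsHermitian) :
    (B * K * B * K).trace ≤ (B * B * K).trace := by
  have hBKB : (B * K * B).PosSemidef := by
    simpa only [hB.eq] using hK.mul_mul_conjTranspose_same B
  have h := trace_mul_nonneg_of_posSemidef hBKB hK1
  rw [Matrix.mul_sub, Matrix.mul_one, Matrix.trace_sub, sub_nonneg,
    Matrix.trace_mul_comm (B * K) B, ← Matrix.mul_assoc] at h
  exact h

/-- If `K` is an `n×n` Hermitian matrix with `0 ≤ K ≤ I` and `B₁, B₂` are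
positive semidefinite Hermitian, then `Tr(B₁KB₂K)` is real and
`0 ≤ Tr(B₁KB₂K) ≤ (1/2)·Tr((B₁+B₂)²K)`. -/
theorem stmt2 (n : ℕ) (K B₁ B₂ : Matrix (Fin n) (Fin n) ℂ)
    (hK : K.PosSemidef) (hK1 : (1 - K).PosSemidef)
    (hB₁ : B₁.PosSemidef) (hB₂ : B₂.PosSemidef) :
    (B₁ * K * B₂ * K).trace.im = 0 ∧
    0 ≤ (B₁ * K * B₂ * K).trace.re ∧
    (B₁ * K * B₂ * K).trace.re ≤ (1 / 2) * ((B₁ + B₂) * (B₁ + B₂) * K).trace.re := by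
  have h12 := Complex.le_def.mp (trace_sandwich_nonneg hK.isHermitian hB₁ hB₂)
  refine ⟨h12.2.symm, h12.1, ?_⟩
  have h11 := (Complex.le_def.mp (trace_sandwich_nonneg hK.isHermitian hB₁ hB₁)).1
  have h22 := (Complex.le_def.mp (trace_sandwich_nonneg hK.isHermitian hB₂ hB₂)).1
  have hle := (Complex.le_def.mp
    (trace_sandwich_self_le hK hK1 (hB₁.isHermitian.add hB₂.isHermitian))).1
  have hcomm : (B₂ * K * B₁ * K).trace = (B₁ * K * B₂ * K).trace := by
    rw [Matrix.mul_assoc (B₂ * K), Matrix.trace_mul_comm, ← Matrix.mul_assoc]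
  have hexp : ((B₁ + B₂) * K * (B₁ + B₂) * K).trace =
      (B₁ * K * B₁ * K).trace + (B₁ * K * B₂ * K).trace + (B₁ * K * B₂ * K).trace +
        (B₂ * K * B₂ * K).trace := by
    nth_rewrite 2 [← hcomm]
    simp only [Matrix.add_mul, Matrix.mul_add, Matrix.trace_add]
    ring
  rw [hexp] at hle
  simp only [Complex.add_re, Complex.zero_re] at hle h11 h22
  linarith
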